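/- For every y ≥ 52 and t > 0 with y² ≥ 16·t, and every s with 4t²/y² < s < t, one has 1 − 2e^{−1} ≤ (p(t,1,y) − p(t−s,1,y))/p(t,1,y) ≤ 1. -/

import Mathlib

open Real MeasureTheory

/-- Modified Bessel function of the first kind, order 0. -/
noncomputable def I0 (z : ℝ) : ℝ := ∑' n : ℕ, (z/2)^(2*n) / ((n.factorial : ℝ))^2

/-- Modified Bessel function of the first kind, order 1. -/
noncomputable def I1 (z : ℝ) : ℝ :=
  ∑' n : ℕ, (z/2)^(2*n+1) / ((n.factorial : ℝ) * ((n+1).factorial : ℝ))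

/-- Heat kernel of the Bessel operator `d²/dx² + (1/x) d/dx` on `(0,∞)`
with respect to the measure `y dy`. -/
noncomputable def pk (t x y : ℝ) : ℝ :=
  t⁻¹ * Real.exp (-(x^2 + y^2)/(2*t)) * I0 (x*y/t)

/-- The function `h` from (AC): Dirichlet heat kernel of `(1/2) d²/dx²` on `(1,∞)`
multiplied by `(xy)⁻¹`. -/
noncomputable def hker (t x y : ℝ) : ℝ :=
  (2*Real.pi*t)^(-(1:ℝ)/2) * (x*y)⁻¹ *
    (Real.exp (-(x-y)^2/(2*t)) - Real.exp (-(x+y-2)^2/(2*t)))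

/-!
Since `I₀' = I₁ ≤ I₀`, the function `z ↦ e⁻ᶻ I₀(z)` is antitone. For `0 < τ ≤ t` and `0 ≤ x y` this
bounds `I₀(x y / τ) / I₀(x y / t)` by the exponential of the difference of the arguments, which
completes the square in the Gaussian factors of `p(τ,x,y) / p(t,x,y)`. The remaining factor `t / τ`
is at most `exp (t / τ - 1)`, so that the quotient is at most
`exp ((t / τ - 1) (1 - (y - x)² / (2 t)))`. The exponent is at most `-1` as soon as
`2 t² ≤ (t - τ) (y - x)²`.
-/

lemma summable_I0 (z : ℝ) :
    Summable fun n : ℕ => (z / 2) ^ (2 * n) / (n.factorial : ℝ) ^ 2 := by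
  refine .of_nonneg_of_le (fun n => ?_) (fun n => ?_)
    (Real.summable_pow_div_factorial ((z / 2) ^ 2))
  · rw [pow_mul]
    positivity
  · have one_le_factorial : (1 : ℝ) ≤ n.factorial := by exact_mod_cast n.factorial_pos
    rw [pow_mul]
    gcongr
    exact le_self_pow₀ one_le_factorial two_ne_zero

lemma hasSum_I0 (z : ℝ) :
    HasSum (fun n : ℕ => (z / 2) ^ (2 * n) / (n.factorial : ℝ) ^ 2) (I0 z) :=
  (summable_I0 z).hasSum

lemma hasSum_I0_succ (z : ℝ) :
    HasSum (fun n : ℕ => (z / 2) ^ (2 * (n + 1)) / ((n + 1).factorial : ℝ) ^ 2) (I0 z - 1) := by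
  simpa using (hasSum_nat_add_iff' 1).2 (hasSum_I0 z)

lemma I0_pos (z : ℝ) : 0 < I0 z := by
  refine (summable_I0 z).tsum_pos (fun n => ?_) 0 (by simp)
  rw [pow_mul]
  positivity

lemma abs_I1_summand_le (z : ℝ) (n : ℕ) :
    |(z / 2) ^ (2 * n + 1) / ((n.factorial : ℝ) * ((n + 1).factorial : ℝ))| ≤
      ((z / 2) ^ (2 * n) / (n.factorial : ℝ) ^ 2 +
        (z / 2) ^ (2 * (n + 1)) / ((n + 1).factorial : ℝ) ^ 2) / 2 := by
  set u := |z / 2| ^ n / (n.factorial : ℝ)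
  set v := |z / 2| ^ (n + 1) / ((n + 1).factorial : ℝ)
  calc |(z / 2) ^ (2 * n + 1) / ((n.factorial : ℝ) * ((n + 1).factorial : ℝ))|
      = u * v := by
        rw [abs_div, abs_pow, abs_of_nonneg (by positivity : (0 : ℝ) ≤ _ * _), div_mul_div_comm]
        ring
    _ ≤ (u ^ 2 + v ^ 2) / 2 := by linarith [two_mul_le_add_sq u v]
    _ = _ := by
        simp only [u, v, div_pow, ← pow_mul, mul_comm _ 2, (even_two_mul _).pow_abs]

lemma summable_I1 (z : ℝ) :
    Summable fun n : ℕ =>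
      (z / 2) ^ (2 * n + 1) / ((n.factorial : ℝ) * ((n + 1).factorial : ℝ)) :=
  .of_norm_bounded (((summable_I0 z).add (hasSum_I0_succ z).summable).div_const 2)
    (abs_I1_summand_le z)

lemma I1_le_I0 (z : ℝ) : I1 z ≤ I0 z := by
  have I1_le : I1 z ≤ (I0 z + (I0 z - 1)) / 2 :=
    hasSum_le (fun n => (le_abs_self _).trans (abs_I1_summand_le z n)) (summable_I1 z).hasSum
      (((hasSum_I0 z).add (hasSum_I0_succ z)).div_const 2)
  linarith

lemma hasDerivAt_I0_summand_succ (n : ℕ) (z : ℝ) :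
    HasDerivAt (fun w : ℝ => (w / 2) ^ (2 * (n + 1)) / ((n + 1).factorial : ℝ) ^ 2)
      ((z / 2) ^ (2 * n + 1) / ((n.factorial : ℝ) * ((n + 1).factorial : ℝ))) z := by
  refine ((((hasDerivAt_id z).div_const 2).fun_pow (2 * (n + 1))).div_const
    (((n + 1).factorial : ℝ) ^ 2)).congr_deriv ?_
  rw [show 2 * (n + 1) - 1 = 2 * n + 1 by lia, Nat.factorial_succ]
  push_cast
  simp only [id]
  field_simp

lemma hasDerivAt_I0 (z : ℝ) : HasDerivAt I0 (I1 z) z := by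
  have I0_eq : I0 = fun w => (∑' n : ℕ,
      (w / 2) ^ (2 * (n + 1)) / ((n + 1).factorial : ℝ) ^ 2) + 1 := by
    funext w
    rw [(hasSum_I0_succ w).tsum_eq, sub_add_cancel]
  rw [I0_eq]
  refine (hasDerivAt_tsum_of_isPreconnected (summable_I1 (|z| + 1)) Metric.isOpen_ball
    (convex_ball (0 : ℝ) (|z| + 1)).isPreconnected
    (fun n w _ => hasDerivAt_I0_summand_succ n w) (fun n w hw => ?_)
    (Metric.mem_ball_self (by positivity)) (hasSum_I0_succ 0).summable (by simp)).add_const 1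
  have abs_le : |w| ≤ |z| + 1 := (mem_ball_zero_iff.1 hw).le
  rw [norm_div, norm_pow, norm_div, Real.norm_of_nonneg (by positivity : (0 : ℝ) ≤ _ * _),
    Real.norm_two, Real.norm_eq_abs]
  gcongr

lemma antitone_exp_neg_mul_I0 : Antitone fun z => exp (-z) * I0 z := by
  have hasDerivAt (z : ℝ) :
      HasDerivAt (fun w => exp (-w) * I0 w) (exp (-z) * (I1 z - I0 z)) z :=
    ((hasDerivAt_neg z).exp.fun_mul (hasDerivAt_I0 z)).congr_deriv (by ring)
  exact antitone_of_hasDerivAt_nonpos hasDerivAt fun z =>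
    mul_nonpos_of_nonneg_of_nonpos (exp_pos _).le (sub_nonpos.2 (I1_le_I0 z))

lemma I0_le_exp_sub_mul_I0 {a b : ℝ} (hab : a ≤ b) : I0 b ≤ exp (b - a) * I0 a :=
  calc I0 b = exp b * (exp (-b) * I0 b) := by rw [← mul_assoc, ← exp_add]; simp
    _ ≤ exp b * (exp (-a) * I0 a) :=
      mul_le_mul_of_nonneg_left (antitone_exp_neg_mul_I0 hab) (exp_pos b).le
    _ = exp (b - a) * I0 a := by rw [← mul_assoc, ← exp_add, sub_eq_add_neg]

lemma pk_pos {t : ℝ} (ht : 0 < t) (x y : ℝ) : 0 < pk t x y := by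
  have := I0_pos (x * y / t)
  unfold pk
  positivity

lemma inv_le_exp_div_sub_one_mul_inv {t τ : ℝ} (ht : 0 < t) : τ⁻¹ ≤ exp (t / τ - 1) * t⁻¹ :=
  calc τ⁻¹ = t / τ * t⁻¹ := by field_simp
    _ ≤ exp (t / τ - 1) * t⁻¹ := by gcongr; linarith [add_one_le_exp (t / τ - 1)]

lemma pk_le_exp_mul_pk {x y t τ : ℝ} (hxy : 0 ≤ x * y) (hτ : 0 < τ) (hτt : τ ≤ t) :
    pk τ x y ≤ exp ((t / τ - 1) * (1 - (y - x) ^ 2 / (2 * t))) * pk t x y := by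
  have ht : 0 < t := hτ.trans_le hτt
  have I0_le : I0 (x * y / τ) ≤ exp (x * y / τ - x * y / t) * I0 (x * y / t) :=
    I0_le_exp_sub_mul_I0 (by gcongr)
  have exponent_eq : (t / τ - 1) + -(x ^ 2 + y ^ 2) / (2 * τ) + (x * y / τ - x * y / t) =
      (t / τ - 1) * (1 - (y - x) ^ 2 / (2 * t)) + -(x ^ 2 + y ^ 2) / (2 * t) := by
    field_simp
    ring
  calc pk τ x y
      ≤ (exp (t / τ - 1) * t⁻¹) * exp (-(x ^ 2 + y ^ 2) / (2 * τ)) *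
          (exp (x * y / τ - x * y / t) * I0 (x * y / t)) := by
        have := (I0_pos (x * y / τ)).le
        unfold pk
        gcongr
        exact inv_le_exp_div_sub_one_mul_inv ht
    _ = exp ((t / τ - 1) + -(x ^ 2 + y ^ 2) / (2 * τ) + (x * y / τ - x * y / t)) *
          (t⁻¹ * I0 (x * y / t)) := by
        rw [exp_add, exp_add]
        ring
    _ = exp ((t / τ - 1) * (1 - (y - x) ^ 2 / (2 * t))) * pk t x y := by
        rw [exponent_eq, exp_add, pk]
        ring

lemma pk_le_exp_neg_one_mul_pk {x y t τ : ℝ} (hxy : 0 ≤ x * y) (hτ : 0 < τ) (hτt : τ ≤ t)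
    (h : 2 * t ^ 2 ≤ (t - τ) * (y - x) ^ 2) : pk τ x y ≤ exp (-1) * pk t x y := by
  have ht : 0 < t := hτ.trans_le hτt
  have exponent_le : (t / τ - 1) * (1 - (y - x) ^ 2 / (2 * t)) ≤ -1 :=
    calc (t / τ - 1) * (1 - (y - x) ^ 2 / (2 * t))
        = -1 - ((t - τ) * (y - x) ^ 2 - 2 * t ^ 2) / (2 * t * τ) := by
          field_simp
          ring
      _ ≤ -1 := sub_le_self _ (div_nonneg (sub_nonneg.2 h) (by positivity))
  have := pk_pos ht x y
  exact (pk_le_exp_mul_pk hxy hτ hτt).trans (by gcongr)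

lemma two_mul_sq_le_mul_sub_sq {x y t s : ℝ} (hx : 0 ≤ x) (hy : 0 < y) (hxy : 4 * x ≤ y)
    (hs : 4 * t ^ 2 / y ^ 2 ≤ s) : 2 * t ^ 2 ≤ s * (y - x) ^ 2 := by
  have hs₀ : 0 ≤ s := le_trans (by positivity) hs
  have sq_le : y ^ 2 ≤ 2 * (y - x) ^ 2 := by nlinarith
  have four_mul_sq_le : 4 * t ^ 2 ≤ s * (2 * (y - x) ^ 2) :=
    ((div_le_iff₀ (by positivity)).1 hs).trans (by gcongr)
  linarith

theorem bessel_heat_kernel_time_difference_large_s_general {x y t s : ℝ} (hxy : 0 ≤ x * y)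
    (ht : 0 < t) (hst : s < t) (hs : 2 * t ^ 2 ≤ s * (y - x) ^ 2) :
    1 - exp (-1) ≤ (pk t x y - pk (t - s) x y) / pk t x y ∧
      (pk t x y - pk (t - s) x y) / pk t x y ≤ 1 := by
  have hs₀ : 0 < s :=
    pos_of_mul_pos_left (lt_of_lt_of_le (by positivity) hs) (sq_nonneg (y - x))
  have pk_le : pk (t - s) x y ≤ exp (-1) * pk t x y :=
    pk_le_exp_neg_one_mul_pk hxy (sub_pos.2 hst) (sub_le_self t hs₀.le)
      (by rwa [sub_sub_cancel])
  have pk_t_pos := pk_pos ht x y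
  have pk_sub_pos := pk_pos (sub_pos.2 hst) x y
  rw [le_div_iff₀ pk_t_pos, div_le_one pk_t_pos]
  constructor <;> linarith

theorem bessel_heat_kernel_time_difference_large_s :
    ∀ y t s : ℝ, 52 ≤ y → 0 < t → 16*t ≤ y^2 → 4*t^2/y^2 < s → s < t →
      1 - 2*Real.exp (-1) ≤ (pk t 1 y - pk (t-s) 1 y) / pk t 1 y ∧
      (pk t 1 y - pk (t-s) 1 y) / pk t 1 y ≤ 1 := by
  intro y t s hy ht _ hs hst
  obtain ⟨le_quotient, quotient_le⟩ := bessel_heat_kernel_time_difference_large_s_general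
    (x := 1) (by linarith) ht hst
    (two_mul_sq_le_mul_sub_sq zero_le_one (by linarith) (by linarith) hs.le)
  exact ⟨by linarith [exp_pos (-1)], quotient_le⟩
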